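/- Let k ≥ 2 be even and let T be a tree on n vertices of diameter at least k + 4. Then mdi_k(T) > f_k(n). -/

import Mathlib

/-- `J` is a distance-`k` independent set in `G`: any two distinct vertices of `J`
are at graph distance at least `k + 1`. -/
def DkIndep {V : Type*} (G : SimpleGraph V) (k : ℕ) (J : Set V) : Prop :=
  ∀ ⦃u⦄, u ∈ J → ∀ ⦃v⦄, v ∈ J → u ≠ v → k + 1 ≤ G.dist u v

/-- `J` is a maximal distance-`k` independent set (`k`-MDIS) of `G`. -/
def MaxDkIndep {V : Type*} (G : SimpleGraph V) (k : ℕ) (J : Set V) : Prop :=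
  DkIndep G k J ∧ ∀ J', DkIndep G k J' → J ⊆ J' → J' = J

/-- `mdi G k` is the number of maximal distance-`k` independent sets of `G`. -/
noncomputable def mdi {V : Type*} (G : SimpleGraph V) (k : ℕ) : ℕ :=
  {J : Set V | MaxDkIndep G k J}.ncard

/-- `f_k(n)` from the paper. -/
def fk (k n : ℕ) : ℕ :=
  if n ≤ k + 1 then n else n - (n - k % 2) / (k / 2 + 1) + 1

/-- closed ball `N_k[x]`. -/
def ball {V : Type*} (G : SimpleGraph V) (k : ℕ) (x : V) : Set V :=
  {v | G.dist x v ≤ k}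

/-- a leaf is a vertex of degree 1. -/
def IsLeaf {V : Type*} (G : SimpleGraph V) (v : V) : Prop :=
  (G.neighborSet v).ncard = 1

/-- eccentricity of a vertex. -/
noncomputable def ecc {V : Type*} [Fintype V] (G : SimpleGraph V) (v : V) : ℕ :=
  Finset.univ.sup (G.dist v)

/-- diameter of a finite graph. -/
noncomputable def gdiam {V : Type*} [Fintype V] (G : SimpleGraph V) : ℕ :=
  Finset.univ.sup (ecc G)

/-- a central vertex is one of minimum eccentricity. -/
def IsCentral {V : Type*} [Fintype V] (G : SimpleGraph V) (v : V) : Prop :=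
  ∀ u, ecc G v ≤ ecc G u

/-- a `k`-twin: some other vertex has the same closed `k`-ball. -/
def KTwin {V : Type*} (G : SimpleGraph V) (k : ℕ) (u : V) : Prop :=
  ∃ v, v ≠ u ∧ ball G k u = ball G k v

/-- a diametral leaf: a leaf whose eccentricity equals the diameter. -/
def IsDiametralLeaf {V : Type*} [Fintype V] (G : SimpleGraph V) (u : V) : Prop :=
  IsLeaf G u ∧ ecc G u = gdiam G

/-- a `k`-special pair. -/
def KSpecial {V : Type*} [Fintype V] (G : SimpleGraph V) (k : ℕ) (x y : V) : Prop :=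
  IsDiametralLeaf G x ∧ IsDiametralLeaf G y ∧ KTwin G k x ∧ KTwin G k y ∧
    ball G k x ≠ ball G k y

/-- `mdi*_k(G, ℓ)`. -/
noncomputable def mdiStar {V : Type*} (G : SimpleGraph V) (k : ℕ) (ℓ : V) : ℕ :=
  {J : Set V | MaxDkIndep G k J ∧ ℓ ∈ J ∧ ∃ w ∉ J, ball G k w ∩ J = {ℓ}}.ncard

/-- The spider tree `S_{p,m}`: a center (`none`) together with `p` legs of `m` vertices. -/
def spider (p m : ℕ) : SimpleGraph (Option (Fin p × Fin m)) :=
  SimpleGraph.fromRel fun a b =>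
    match a, b with
    | none, some (_, j) => (j : ℕ) = 0
    | some (i, j), some (i', j') => i = i' ∧ (j : ℕ) + 1 = (j' : ℕ)
    | _, _ => False

/-- `S'_{p,m}`: the spider `S_{p,m}` with one leaf at distance `m` from the center removed. -/
def spider' (p m : ℕ) (hp : 0 < p) (hm : 0 < m) :=
  (spider p m).induce
    {v | v ≠ some (⟨0, hp⟩, ⟨m - 1, Nat.sub_lt hm Nat.one_pos⟩)}

/-- The double spider `B_{p₁,p₂,s}`: two adjacent centers (`Sum.inl false`, `Sum.inl true`),
with `p₁` legs of `s` vertices on the first and `p₂` legs of `s` vertices on the second. -/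
def btree (p₁ p₂ s : ℕ) : SimpleGraph (Bool ⊕ ((Fin p₁ ⊕ Fin p₂) × Fin s)) :=
  SimpleGraph.fromRel fun a b =>
    match a, b with
    | Sum.inl x, Sum.inl y => x ≠ y
    | Sum.inl false, Sum.inr (Sum.inl _, j) => (j : ℕ) = 0
    | Sum.inl true, Sum.inr (Sum.inr _, j) => (j : ℕ) = 0
    | Sum.inr (c, j), Sum.inr (c', j') => c = c' ∧ (j : ℕ) + 1 = (j' : ℕ)
    | _, _ => False

/-- `G` contains a subgraph isomorphic to `H`. -/
def ContainsSub {V W : Type*} (G : SimpleGraph V) (H : SimpleGraph W) : Prop :=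
  ∃ f : W → V, Function.Injective f ∧ ∀ a b, H.Adj a b → G.Adj (f a) (f b)

/-- A pendant path on `s` vertices `P 0, …, P (s-1)` attached to `w`:
`P 0` is a leaf, consecutive vertices are adjacent, interior vertices have degree 2,
and `P (s-1)` is adjacent to `w`. -/
def IsPendantPath {V : Type*} (T : SimpleGraph V) (s : ℕ) (P : ℕ → V) (w : V) : Prop :=
  Set.InjOn P (Set.Iio s) ∧ (∀ i < s, P i ≠ w) ∧ IsLeaf T (P 0) ∧
    (∀ i, i + 1 < s → T.Adj (P i) (P (i + 1))) ∧
    (∀ i, 0 < i → i < s → (T.neighborSet (P i)).ncard = 2) ∧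
    T.Adj (P (s - 1)) w

/-- Isomorphism of simple graphs on `Fin n` as a setoid. -/
def graphSetoid (n : ℕ) : Setoid (SimpleGraph (Fin n)) where
  r G H := Nonempty (G ≃g H)
  iseqv := ⟨fun _ => ⟨SimpleGraph.Iso.refl⟩, fun ⟨e⟩ => ⟨e.symm⟩, fun ⟨e⟩ ⟨f⟩ => ⟨e.trans f⟩⟩

/-- The number of isomorphism classes of graphs in a set of graphs on `Fin n`. -/
noncomputable def numIsoClasses {n : ℕ} (S : Set (SimpleGraph (Fin n))) : ℕ :=
  ((fun G => Quotient.mk (graphSetoid n) G) '' S).ncard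

/-!
Let `k = 2m`, and let `M(S)` be the number of maximal distance-`2m` independent sets of a subtree
`S`. If `S` has more than `m` vertices, then `(m + 1) M(S) - m |S| ≥ m + 1`, and this improves to
`2 (m + 1)` once the diameter of `S` is at least `2m + 3`. The latter bound amounts to
`M(S) > f_k(|S|)`.

Let `S` have diameter at least `2m + 2`, let `l` be an end of a longest path and `c` the vertex at
distance `m + 1` from `l` on it. Removing the branches at `c` of depth at most `m` loses a set for
each removed vertex, with at most one exception: a vertex at depth `i < m` dominates the vertex at
depth `i` on the way to `l`, and those at depth `m` are twins. When all branches at `c` have depth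
greater than `m`, some maximal independent set contains `l` and avoids the `m`-ball around `c`; the
neighbour of `l` is then a private neighbour of `l`, so that removing `l` loses this set. If the
diameter is at least `2m + 3` there are two such sets. Hence peeling off these vertices does not
increase `(m + 1) M(S) - m |S|`, and lowers it by `m + 1` if the diameter is at least `2m + 3`.
Subtrees of diameter at most `2m + 1` are treated directly.
-/

section MaximalIndependentSets

open scoped Finset

variable {V : Type*} {H : SimpleGraph V} {S X J : Finset V} {v w : V}

open Classical in
/-- The maximal independent sets of the subgraph of `H` induced on `S`, as subsets of `V`. -/
noncomputable def maxIndepSets (H : SimpleGraph V) (S : Finset V) : Finset (Finset V) :=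
  {J ∈ S.powerset | Maximal (fun K : Finset V ↦ K ⊆ S ∧ H.IsIndepSet K) J}

theorem mem_maxIndepSets :
    J ∈ maxIndepSets H S ↔ Maximal (fun K : Finset V ↦ K ⊆ S ∧ H.IsIndepSet K) J := by
  simpa only [maxIndepSets, Finset.mem_filter, Finset.mem_powerset, and_iff_right_iff_imp]
    using fun h ↦ h.prop.1

theorem isIndepSet_coe_insert [DecidableEq V] :
    H.IsIndepSet ↑(insert v J) ↔ H.IsIndepSet ↑J ∧ ∀ u ∈ J, ¬H.Adj v u := by
  have : Std.Symm fun a b ↦ ¬H.Adj a b := ⟨fun a b h h' ↦ h h'.symm⟩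
  rw [Finset.coe_insert, SimpleGraph.IsIndepSet, Set.pairwise_insert_of_symm]
  refine and_congr_right fun _ ↦ forall₂_congr fun u _ ↦ ⟨fun h hvu ↦ h hvu.ne hvu, fun h _ ↦ h⟩

theorem mem_maxIndepSets_iff_dominating :
    J ∈ maxIndepSets H S ↔
      J ⊆ S ∧ H.IsIndepSet J ∧ ∀ u ∈ S, u ∉ J → ∃ v ∈ J, H.Adj u v := by
  classical
  rw [mem_maxIndepSets, Finset.maximal_iff_forall_insert
    fun s t ht hst ↦ ⟨hst.trans ht.1, ht.2.mono (Finset.coe_subset.2 hst)⟩, and_assoc]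
  refine and_congr_right fun hJS ↦ and_congr_right fun hJ ↦ ?_
  simp only [isIndepSet_coe_insert, Finset.insert_subset_iff, hJS, hJ, and_true, true_and, not_and,
    not_forall, not_not, exists_prop]
  exact forall_congr' fun u ↦ forall_comm

theorem exists_mem_maxIndepSets_superset (hJS : J ⊆ S) (hJ : H.IsIndepSet J) :
    ∃ K ∈ maxIndepSets H S, J ⊆ K := by
  have hfin : {K : Finset V | K ⊆ S ∧ H.IsIndepSet K}.Finite :=
    S.powerset.finite_toSet.subset fun K hK ↦ by simpa using hK.1
  obtain ⟨K, hJK, hK⟩ := hfin.exists_le_maximal ⟨hJS, hJ⟩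
  exact ⟨K, mem_maxIndepSets.2 hK, hJK⟩

open Classical in
/-- The maximal independent sets `J` of `H[S]` through `v` in which `v` has a private neighbour: a
vertex of `S \ J` whose only neighbour in `J` is `v`. They are counted by the paper's `mdi*`. -/
noncomputable def starMaxIndepSets (H : SimpleGraph V) (S : Finset V) (v : V) :
    Finset (Finset V) :=
  {J ∈ maxIndepSets H S | v ∈ J ∧ ∃ w ∈ S, w ∉ J ∧ ∀ u ∈ J, H.Adj w u → u = v}

theorem mem_starMaxIndepSets :
    J ∈ starMaxIndepSets H S v ↔
      J ∈ maxIndepSets H S ∧ v ∈ J ∧ ∃ w ∈ S, w ∉ J ∧ ∀ u ∈ J, H.Adj w u → u = v := by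
  simp only [starMaxIndepSets, Finset.mem_filter]

theorem insert_mem_maxIndepSets [DecidableEq V] (hv : v ∈ S)
    (hJ : J ∈ maxIndepSets H (S.erase v)) (h : ∀ u ∈ J, ¬H.Adj v u) :
    insert v J ∈ maxIndepSets H S := by
  obtain ⟨hJS, hind, hdom⟩ := mem_maxIndepSets_iff_dominating.1 hJ
  refine mem_maxIndepSets_iff_dominating.2
    ⟨Finset.insert_subset hv (hJS.trans (S.erase_subset v)), isIndepSet_coe_insert.2 ⟨hind, h⟩,
      fun u hu huJ ↦ ?_⟩
  rw [Finset.mem_insert, not_or] at huJ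
  obtain ⟨x, hx, hux⟩ := hdom u (Finset.mem_erase.2 ⟨huJ.1, hu⟩) huJ.2
  exact ⟨x, Finset.mem_insert_of_mem hx, hux⟩

theorem mem_maxIndepSets_of_erase [DecidableEq V] (hJ : J ∈ maxIndepSets H (S.erase v))
    (h : ∃ u ∈ J, H.Adj v u) : J ∈ maxIndepSets H S := by
  obtain ⟨hJS, hind, hdom⟩ := mem_maxIndepSets_iff_dominating.1 hJ
  refine mem_maxIndepSets_iff_dominating.2
    ⟨hJS.trans (S.erase_subset v), hind, fun u hu huJ ↦ ?_⟩
  obtain rfl | huv := eq_or_ne u v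
  · exact h
  · exact hdom u (Finset.mem_erase.2 ⟨huv, hu⟩) huJ

-- `K ↦ K.erase v` maps the maximal independent sets outside the star onto those of `H[S \ {v}]`.
theorem card_maxIndepSets_erase_add_card_star_le [DecidableEq V] (hv : v ∈ S) :
    #(maxIndepSets H (S.erase v)) + #(starMaxIndepSets H S v) ≤ #(maxIndepSets H S) := by
  classical
  have hsurj : #(maxIndepSets H (S.erase v)) ≤
      #(maxIndepSets H S \ starMaxIndepSets H S v) := by
    refine Finset.card_le_card_of_surjOn (Finset.erase · v) fun J hJ ↦ ?_
    obtain ⟨hJS, -, hdom⟩ := mem_maxIndepSets_iff_dominating.1 hJ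
    have hvJ : v ∉ J := fun h ↦ S.notMem_erase v (hJS h)
    by_cases h : ∃ u ∈ J, H.Adj v u
    · refine ⟨J, Finset.mem_coe.2 (Finset.mem_sdiff.2 ⟨mem_maxIndepSets_of_erase hJ h, ?_⟩),
        Finset.erase_eq_of_notMem hvJ⟩
      exact fun hstar ↦ hvJ (mem_starMaxIndepSets.1 hstar).2.1
    · push Not at h
      refine ⟨insert v J, Finset.mem_coe.2 (Finset.mem_sdiff.2
        ⟨insert_mem_maxIndepSets hv hJ h, fun hstar ↦ ?_⟩), Finset.erase_insert hvJ⟩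
      obtain ⟨-, -, w, hwS, hwJ, hpriv⟩ := mem_starMaxIndepSets.1 hstar
      rw [Finset.mem_insert, not_or] at hwJ
      obtain ⟨u, hu, hwu⟩ := hdom w (Finset.mem_erase.2 ⟨hwJ.1, hwS⟩) hwJ.2
      exact hvJ (hpriv u (Finset.mem_insert_of_mem hu) hwu ▸ hu)
  have hstar : starMaxIndepSets H S v ⊆ maxIndepSets H S :=
    fun J hJ ↦ (mem_starMaxIndepSets.1 hJ).1
  rw [← Finset.card_sdiff_add_card_eq_card hstar]
  exact Nat.add_le_add_right hsurj _

/-- `v` dominates `w` in `H[S]`: the closed neighbourhood of `w` is contained in that of `v`. Then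
`w` is a private neighbour of `v` for every independent set through `v`, so that deleting `v` loses
a maximal independent set. Twins are vertices that dominate each other. -/
def Dominates (H : SimpleGraph V) (S : Finset V) (v w : V) : Prop :=
  ∀ u ∈ S, u = w ∨ H.Adj u w → u = v ∨ H.Adj u v

theorem starMaxIndepSets_nonempty (hv : v ∈ S) (hw : w ∈ S) (hwv : w ≠ v)
    (hdom : Dominates H S v w) : (starMaxIndepSets H S v).Nonempty := by
  obtain ⟨K, hK, hvK⟩ := exists_mem_maxIndepSets_superset (H := H) (J := {v})
    (Finset.singleton_subset_iff.2 hv) (by simp [SimpleGraph.IsIndepSet])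
  obtain ⟨hKS, hind, -⟩ := mem_maxIndepSets_iff_dominating.1 hK
  rw [Finset.singleton_subset_iff] at hvK
  have hpriv : ∀ u ∈ K, u = w ∨ H.Adj u w → u = v := fun u hu huw ↦
    (hdom u (hKS hu) huw).resolve_right fun huv ↦ hind hu hvK huv.ne huv
  exact ⟨K, mem_starMaxIndepSets.2 ⟨hK, hvK, w, hw, fun h ↦ hwv (hpriv w h (.inl rfl)),
    fun u hu hwu ↦ hpriv u hu (.inr hwu.symm)⟩⟩

theorem card_maxIndepSets_sdiff_add_card_le [DecidableEq V] (hXS : X ⊆ S)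
    (hX : ∀ v ∈ X, ∃ w ∈ S \ X, Dominates H S v w) :
    #(maxIndepSets H (S \ X)) + #X ≤ #(maxIndepSets H S) := by
  induction X using Finset.induction_on generalizing S with
  | empty => simp
  | insert v X hvX ih =>
    obtain ⟨hv, hXS⟩ := Finset.insert_subset_iff.1 hXS
    obtain ⟨w, hw, hvw⟩ := hX v (X.mem_insert_self v)
    rw [Finset.mem_sdiff, Finset.mem_insert, not_or] at hw
    have hstar := (starMaxIndepSets_nonempty hv hw.1 hw.2.1 hvw).card_pos
    have herase := card_maxIndepSets_erase_add_card_star_le (H := H) hv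
    have hsdiff := ih (S := S.erase v) (Finset.subset_erase.2 ⟨hXS, hvX⟩) fun x hx ↦ by
      obtain ⟨y, hy, hxy⟩ := hX x (Finset.mem_insert_of_mem hx)
      refine ⟨y, ?_, fun u hu ↦ hxy u (Finset.mem_of_mem_erase hu)⟩
      simp only [Finset.mem_sdiff, Finset.mem_insert, Finset.mem_erase, not_or] at hy ⊢
      exact ⟨⟨hy.2.1, hy.1⟩, hy.2.2⟩
    rw [Finset.erase_sdiff_comm, ← Finset.sdiff_insert] at hsdiff
    rw [Finset.card_insert_of_notMem hvX]
    lia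

-- Remove all twins but one by domination; removing the last one does not increase the count.
theorem card_maxIndepSets_sdiff_add_card_le_of_twins [DecidableEq V] (hXS : X ⊆ S)
    (hX : ∀ v ∈ X, ∀ w ∈ X, Dominates H S v w) :
    #(maxIndepSets H (S \ X)) + #X ≤ #(maxIndepSets H S) + 1 := by
  obtain rfl | ⟨x, hx⟩ := X.eq_empty_or_nonempty
  · simp
  have hothers := card_maxIndepSets_sdiff_add_card_le (H := H) ((X.erase_subset x).trans hXS)
    fun v hv ↦ ⟨x, by simp [hXS hx], hX v (Finset.mem_of_mem_erase hv) x hx⟩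
  have hlast := card_maxIndepSets_erase_add_card_star_le (H := H) (S := S \ X.erase x) (v := x)
    (by simp [hXS hx])
  rw [← Finset.sdiff_insert, Finset.insert_erase hx] at hlast
  have := Finset.card_erase_add_one hx
  lia

theorem card_le_card_maxIndepSets_of_isClique (hS : H.IsClique S) : #S ≤ #(maxIndepSets H S) := by
  refine Finset.card_le_card_of_injOn (fun v ↦ {v}) (fun v hv ↦ ?_)
    Finset.singleton_injective.injOn
  refine Finset.mem_coe.2 (mem_maxIndepSets_iff_dominating.2
    ⟨Finset.singleton_subset_iff.2 hv, by simp [SimpleGraph.IsIndepSet], fun u hu huv ↦ ?_⟩)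
  exact ⟨v, Finset.mem_singleton_self v, hS hu hv (by simpa using huv)⟩

end MaximalIndependentSets

section PowerGraph

open scoped Finset

variable {V : Type*} {G : SimpleGraph V} {S : Finset V} {k : ℕ} {u v w : V}

/-- The `k`-th power of `G`: distinct vertices are adjacent when their distance in `G` is at most
`k`. Its independent sets are the distance-`k` independent sets of `G`, also when `G` is
disconnected: vertices in different components have `dist` equal to `0`. -/
def powerGraph (G : SimpleGraph V) (k : ℕ) : SimpleGraph V where
  Adj u v := u ≠ v ∧ G.dist u v ≤ k
  symm := ⟨fun _ _ h ↦ ⟨h.1.symm, G.dist_comm ▸ h.2⟩⟩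
  loopless := ⟨fun _ h ↦ h.1 rfl⟩

theorem powerGraph_adj : (powerGraph G k).Adj u v ↔ u ≠ v ∧ G.dist u v ≤ k := Iff.rfl

theorem eq_or_powerGraph_adj : u = v ∨ (powerGraph G k).Adj u v ↔ G.dist u v ≤ k := by
  obtain rfl | h := eq_or_ne u v
  · simp
  · simp [powerGraph_adj, h]

theorem dominates_powerGraph :
    Dominates (powerGraph G k) S v w ↔ ∀ u ∈ S, G.dist u w ≤ k → G.dist u v ≤ k := by
  simp only [Dominates, eq_or_powerGraph_adj]

theorem isIndepSet_powerGraph {J : Set V} : (powerGraph G k).IsIndepSet J ↔ DkIndep G k J := by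
  simp only [SimpleGraph.IsIndepSet, Set.Pairwise, DkIndep, powerGraph_adj, not_and, not_le,
    Nat.succ_le_iff]
  exact ⟨fun h u hu v hv huv ↦ h hu hv huv huv, fun h u hu v hv huv _ ↦ h hu hv huv⟩

theorem mdi_eq_card_maxIndepSets [Fintype V] :
    mdi G k = #(maxIndepSets (powerGraph G k) Finset.univ) := by
  classical
  rw [mdi, ← Set.ncard_coe_finset,
    ← Set.ncard_image_of_injective _ Finset.coe_injective]
  congr 1
  ext J
  obtain ⟨J, rfl⟩ := J.toFinite.exists_finset_coe
  simp only [MaxDkIndep, Set.mem_ofPred_eq, Set.mem_image, Finset.mem_coe, Finset.coe_inj,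
    exists_eq_right, mem_maxIndepSets, maximal_iff, Finset.subset_univ, true_and,
    isIndepSet_powerGraph]
  refine and_congr_right fun _ ↦ ⟨fun h K hK hJK ↦ ?_, fun h K hK hJK ↦ ?_⟩
  · exact Finset.coe_injective (h K hK (Finset.coe_subset.2 hJK)).symm
  · lift K to Finset V using K.toFinite
    rw [h hK (Finset.coe_subset.1 hJK)]

end PowerGraph

section Branches

variable {V : Type*} {G T : SimpleGraph V} {c u v w : V}

/-- `u` and `v` lie in the same component of `G - c`, that is, in the same branch of `G` at `c`. -/
def SameBranch (G : SimpleGraph V) (c u v : V) : Prop :=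
  ∃ p : G.Walk u v, c ∉ p.support

namespace SameBranch

theorem refl (h : u ≠ c) : SameBranch G c u u :=
  ⟨.nil, by simpa using h.symm⟩

theorem symm : SameBranch G c u v → SameBranch G c v u := fun ⟨p, hp⟩ ↦
  ⟨p.reverse, by simpa using hp⟩

theorem trans : SameBranch G c u v → SameBranch G c v w → SameBranch G c u w :=
  fun ⟨p, hp⟩ ⟨q, hq⟩ ↦ ⟨p.append q, by simp [SimpleGraph.Walk.mem_support_append_iff, hp, hq]⟩

theorem left_ne (h : SameBranch G c u v) : u ≠ c := by
  obtain ⟨p, hp⟩ := h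
  exact fun huc ↦ hp (huc ▸ p.start_mem_support)

theorem right_ne (h : SameBranch G c u v) : v ≠ c := h.symm.left_ne

end SameBranch

theorem exists_dist_eq_of_le (hG : G.Connected) {i : ℕ} (hi : i ≤ G.dist u v) :
    ∃ w, G.dist u w = i ∧ i + G.dist w v = G.dist u v := by
  obtain ⟨p, hp⟩ := hG.exists_walk_length_eq_dist u v
  have htake := SimpleGraph.length_eq_dist_of_subwalk hp (p.isSubwalk_take i)
  have hdrop := SimpleGraph.length_eq_dist_of_subwalk hp (p.isSubwalk_drop i)
  rw [SimpleGraph.Walk.take_length] at htake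
  rw [SimpleGraph.Walk.drop_length] at hdrop
  exact ⟨p.getVert i, by lia, by lia⟩

theorem dist_eq_add_of_not_sameBranch (hG : G.Connected) (h : ¬SameBranch G c u v) :
    G.dist u v = G.dist u c + G.dist c v := by
  classical
  obtain ⟨p, hp⟩ := hG.exists_walk_length_eq_dist u v
  have hc : c ∈ p.support := by_contra fun hc ↦ h ⟨p, hc⟩
  rw [← SimpleGraph.length_eq_dist_of_subwalk hp (p.isSubwalk_takeUntil hc),
    ← SimpleGraph.length_eq_dist_of_subwalk hp (p.isSubwalk_dropUntil hc),
    ← SimpleGraph.Walk.length_append, p.take_spec, hp]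

theorem sameBranch_of_dist_add_dist_eq (hG : G.Connected) (hu : u ≠ c)
    (h : G.dist c u + G.dist u v = G.dist c v) : SameBranch G c u v := by
  by_contra hbranch
  have hadd := dist_eq_add_of_not_sameBranch hG hbranch
  have hpos := hG.pos_dist_of_ne hu
  lia

theorem even_dist_add_dist_add_dist (hT : T.IsTree) (u v w : V) :
    Even (T.dist u v + T.dist v w + T.dist u w) := by
  obtain ⟨p⟩ := hT.connected.preconnected u v
  induction p with
  | nil => simp
  | @cons u u' v huu' _ ih =>
    rw [Nat.even_iff] at ih ⊢
    have hv := hT.dist_eq_dist_add_one_of_adj v huu'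
    have hw := hT.dist_eq_dist_add_one_of_adj w huu'
    rw [T.dist_comm, T.dist_comm (u := v) (v := u')] at hv
    rw [T.dist_comm, T.dist_comm (u := w) (v := u')] at hw
    lia

theorem dist_add_two_le_of_sameBranch (hT : T.IsTree) (h : SameBranch T c u v) :
    T.dist u v + 2 ≤ T.dist u c + T.dist c v := by
  classical
  have hne : T.dist u v ≠ T.dist u c + T.dist c v := fun heq ↦ by
    obtain ⟨p, hp⟩ := hT.connected.exists_walk_length_eq_dist u c
    obtain ⟨q, hq⟩ := hT.connected.exists_walk_length_eq_dist c v
    obtain ⟨r, hr⟩ := h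
    have hpath : (p.append q).IsPath := (p.append q).isPath_of_length_eq_dist (by simp [*])
    have hbypass : p.append q = r.bypass :=
      congrArg Subtype.val <|
        (hT.isAcyclic.subsingleton_path u v).elim ⟨_, hpath⟩ ⟨_, r.bypass_isPath⟩
    refine hr (r.support_bypass_subset_support (hbypass ▸ ?_))
    simp
  have htriangle := hT.connected.dist_triangle (u := u) (v := c) (w := v)
  obtain ⟨i, hi⟩ := even_dist_add_dist_add_dist hT u c v
  lia

theorem not_sameBranch_iff_dist_eq_add (hT : T.IsTree) :
    ¬SameBranch T c u v ↔ T.dist u v = T.dist u c + T.dist c v := by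
  refine ⟨dist_eq_add_of_not_sameBranch hT.connected, fun h hbranch ↦ ?_⟩
  have := dist_add_two_le_of_sameBranch hT hbranch
  lia

end Branches

section GeodesicConvexity

open scoped Finset

variable {V : Type*} {G T : SimpleGraph V} {S A : Finset V} {c l r u v : V}

/-- `S` is geodesically convex in `G`: it contains every vertex on a shortest path between two of
its members. In a tree these are the vertex sets of subtrees. -/
def IsGeodConvex (G : SimpleGraph V) (S : Finset V) : Prop :=
  ∀ u ∈ S, ∀ v ∈ S, ∀ w, G.dist u w + G.dist w v = G.dist u v → w ∈ S

/-- `l` and `r` realise the largest distance between members of `S`. -/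
structure IsDiametralPair (G : SimpleGraph V) (S : Finset V) (l r : V) : Prop where
  left_mem : l ∈ S
  right_mem : r ∈ S
  dist_le : ∀ u ∈ S, ∀ v ∈ S, G.dist u v ≤ G.dist l r

namespace IsGeodConvex

theorem exists_mem_dist_eq (hS : IsGeodConvex G S) (hG : G.Connected) (hu : u ∈ S) (hv : v ∈ S)
    {i : ℕ} (hi : i ≤ G.dist u v) :
    ∃ w ∈ S, G.dist u w = i ∧ i + G.dist w v = G.dist u v := by
  obtain ⟨w, hw, hwv⟩ := exists_dist_eq_of_le hG hi
  exact ⟨w, hS u hu v hv w (by rwa [hw]), hw, hwv⟩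

theorem dist_lt_card (hS : IsGeodConvex G S) (hG : G.Connected) (hu : u ∈ S) (hv : v ∈ S) :
    G.dist u v < #S := by
  have : Nonempty V := ⟨u⟩
  choose! w hw hdist _ using fun i ↦ hS.exists_mem_dist_eq hG hu hv (i := i)
  rw [← Nat.succ_le_iff, ← Finset.card_range (G.dist u v).succ]
  refine Finset.card_le_card_of_injOn w (fun i hi ↦ hw i ?_) fun i hi j hj hij ↦ ?_
  · simpa [Nat.lt_succ_iff] using hi
  · rw [Finset.mem_coe, Finset.mem_range, Nat.lt_succ_iff] at hi hj
    rw [← hdist i hi, hij, hdist j hj]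

theorem of_subset_of_not_sameBranch (hS : IsGeodConvex G S) (hG : G.Connected) (hAS : A ⊆ S)
    (hA : ∀ u ∈ A, ∀ w ∈ S, w ∉ A → w ≠ c ∧ ¬SameBranch G c u w) : IsGeodConvex G A := by
  intro u hu v hv w hw
  by_contra hwA
  have hwS := hS u (hAS hu) v (hAS hv) w hw
  have huw := dist_eq_add_of_not_sameBranch hG (hA u hu w hwS hwA).2
  have hvw := dist_eq_add_of_not_sameBranch hG (hA v hv w hwS hwA).2
  have hpos := hG.pos_dist_of_ne (hA u hu w hwS hwA).1
  have htriangle := hG.dist_triangle (u := u) (v := c) (w := v)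
  rw [G.dist_comm (u := v), G.dist_comm (u := v)] at hvw
  rw [G.dist_comm] at hpos
  lia

end IsGeodConvex

theorem exists_isDiametralPair (G : SimpleGraph V) (hS : S.Nonempty) :
    ∃ l r, IsDiametralPair G S l r := by
  obtain ⟨⟨l, r⟩, hlr, hmax⟩ :=
    (S ×ˢ S).exists_max_image (fun p ↦ G.dist p.1 p.2) (hS.product hS)
  rw [Finset.mem_product] at hlr
  exact ⟨l, r, hlr.1, hlr.2, fun u hu v hv ↦ hmax (u, v) (Finset.mk_mem_product hu hv)⟩

namespace IsDiametralPair

theorem symm (h : IsDiametralPair G S l r) : IsDiametralPair G S r l :=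
  ⟨h.right_mem, h.left_mem, G.dist_comm (u := r) ▸ h.dist_le⟩

theorem mono (h : IsDiametralPair G S l r) (hAS : A ⊆ S) (hl : l ∈ A) (hr : r ∈ A) :
    IsDiametralPair G A l r :=
  ⟨hl, hr, fun u hu v hv ↦ h.dist_le u (hAS hu) v (hAS hv)⟩

theorem dist_le_of_not_sameBranch (h : IsDiametralPair G S l r) (hG : G.Connected) (hu : u ∈ S)
    (hur : ¬SameBranch G c u r) : G.dist c u ≤ G.dist c l := by
  have hsplit := dist_eq_add_of_not_sameBranch hG hur
  have hmax := h.dist_le u hu r h.right_mem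
  have htriangle := hG.dist_triangle (u := l) (v := c) (w := r)
  rw [G.dist_comm (u := c) (v := u), G.dist_comm (u := c) (v := l)]
  lia

theorem isGeodConvex_erase [DecidableEq V] (h : IsDiametralPair T S l r) (hT : T.IsTree)
    (hS : IsGeodConvex T S) : IsGeodConvex T (S.erase l) := by
  have hbranch : ∀ u ∈ S.erase l, SameBranch T l u r := fun u hu ↦ by
    by_contra hur
    have hdist := h.dist_le_of_not_sameBranch hT.connected (Finset.mem_of_mem_erase hu) hur
    rw [T.dist_self, Nat.le_zero, hT.connected.dist_eq_zero_iff] at hdist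
    exact Finset.ne_of_mem_erase hu hdist.symm
  intro u hu v hv w hw
  have hwS := hS u (Finset.mem_of_mem_erase hu) v (Finset.mem_of_mem_erase hv) w hw
  refine Finset.mem_erase.2 ⟨?_, hwS⟩
  rintro rfl
  exact (not_sameBranch_iff_dist_eq_add hT).2 hw.symm ((hbranch u hu).trans (hbranch v hv).symm)

end IsDiametralPair

end GeodesicConvexity

section ShallowBranches

open scoped Finset

variable {V : Type*} {T : SimpleGraph V} {m : ℕ} {S : Finset V} {c l r u v : V}

open Classical in
/-- The vertices of `S` in the branches at `c` that contain no vertex of `S` at distance `m + 1`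
from `c`. For a subtree `S` through `c`, these are the branches of depth at most `m`. -/
noncomputable def shallowBranches (T : SimpleGraph V) (m : ℕ) (S : Finset V) (c : V) : Finset V :=
  {v ∈ S | v ≠ c ∧ ∀ u ∈ S, T.dist c u = m + 1 → ¬SameBranch T c v u}

theorem mem_shallowBranches :
    v ∈ shallowBranches T m S c ↔
      v ∈ S ∧ v ≠ c ∧ ∀ u ∈ S, T.dist c u = m + 1 → ¬SameBranch T c v u := by
  simp only [shallowBranches, Finset.mem_filter]

theorem shallowBranches_subset : shallowBranches T m S c ⊆ S :=
  fun _ hv ↦ (mem_shallowBranches.1 hv).1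

theorem notMem_shallowBranches_self : c ∉ shallowBranches T m S c :=
  fun hc ↦ (mem_shallowBranches.1 hc).2.1 rfl

theorem not_sameBranch_of_mem_shallowBranches (hv : v ∈ shallowBranches T m S c) (hu : u ∈ S)
    (huX : u ∉ shallowBranches T m S c) : ¬SameBranch T c v u := by
  intro hvu
  refine huX (mem_shallowBranches.2 ⟨hu, hvu.right_ne, fun w hw hcw huw ↦ ?_⟩)
  exact (mem_shallowBranches.1 hv).2.2 w hw hcw (hvu.trans huw)

theorem dist_le_of_mem_shallowBranches (hT : T.Connected) (hS : IsGeodConvex T S) (hc : c ∈ S)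
    (hv : v ∈ shallowBranches T m S c) : T.dist c v ≤ m := by
  obtain ⟨hvS, -, hshallow⟩ := mem_shallowBranches.1 hv
  by_contra! hlt
  obtain ⟨w, hwS, hcw, hwv⟩ := hS.exists_mem_dist_eq hT hc hvS (Nat.succ_le_of_lt hlt)
  have hwc : w ≠ c := by
    rintro rfl
    simp at hcw
  exact hshallow w hwS hcw (sameBranch_of_dist_add_dist_eq hT hwc (by rwa [hcw])).symm

theorem exists_sameBranch_of_notMem_shallowBranches [DecidableEq V]
    (hv : v ∈ S \ shallowBranches T m S c) (hvc : v ≠ c) :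
    ∃ u ∈ S \ shallowBranches T m S c, T.dist c u = m + 1 ∧ SameBranch T c v u := by
  rw [Finset.mem_sdiff, mem_shallowBranches] at hv
  push Not at hv
  obtain ⟨u, hu, hcu, hvu⟩ := hv.2 hv.1 hvc
  refine ⟨u, Finset.mem_sdiff.2 ⟨hu, fun huX ↦ ?_⟩, hcu, hvu⟩
  exact (mem_shallowBranches.1 huX).2.2 u hu hcu (.refl hvu.right_ne)

theorem isGeodConvex_sdiff_shallowBranches [DecidableEq V] (hT : T.Connected)
    (hS : IsGeodConvex T S) : IsGeodConvex T (S \ shallowBranches T m S c) := by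
  refine hS.of_subset_of_not_sameBranch (c := c) hT Finset.sdiff_subset fun u hu w hw hwX ↦ ?_
  obtain ⟨huS, huX⟩ := Finset.mem_sdiff.1 hu
  have hwX : w ∈ shallowBranches T m S c := by simpa [hw] using hwX
  exact ⟨(mem_shallowBranches.1 hwX).2.1,
    fun huw ↦ not_sameBranch_of_mem_shallowBranches hwX huS huX huw.symm⟩

theorem isGeodConvex_insert_shallowBranches [DecidableEq V] (hT : T.Connected)
    (hS : IsGeodConvex T S) (hc : c ∈ S) :
    IsGeodConvex T (insert c (shallowBranches T m S c)) := by
  refine hS.of_subset_of_not_sameBranch (c := c) hT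
    (Finset.insert_subset hc shallowBranches_subset) fun u hu w hw hwX ↦ ?_
  rw [Finset.mem_insert, not_or] at hwX
  refine ⟨hwX.1, fun huw ↦ ?_⟩
  have huX := (Finset.mem_insert.1 hu).resolve_left huw.left_ne
  exact not_sameBranch_of_mem_shallowBranches huX hw hwX.2 huw

theorem dist_le_card_shallowBranches (hT : T.Connected) (hS : IsGeodConvex T S) (hc : c ∈ S)
    (hv : v ∈ shallowBranches T m S c) : T.dist c v ≤ #(shallowBranches T m S c) := by
  classical
  have hlt := (isGeodConvex_insert_shallowBranches (m := m) hT hS hc).dist_lt_card hT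
    (Finset.mem_insert_self c _) (Finset.mem_insert_of_mem hv)
  rw [Finset.card_insert_of_notMem notMem_shallowBranches_self] at hlt
  exact Nat.le_of_lt_succ hlt

theorem notMem_shallowBranches_of_lt_dist (hT : T.Connected) (hS : IsGeodConvex T S) (hc : c ∈ S)
    (hv : m < T.dist c v) : v ∉ shallowBranches T m S c :=
  fun h ↦ (dist_le_of_mem_shallowBranches hT hS hc h).not_gt hv

-- Twins in the `2m`-th power: a vertex outside the shallow branches is close to either of `v`, `w`
-- exactly when it is within `m` of `c`.
theorem dominates_of_mem_shallowBranches (hT : T.Connected) (hS : IsGeodConvex T S) (hc : c ∈ S)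
    (hv : v ∈ shallowBranches T m S c) (hw : w ∈ shallowBranches T m S c) (hcw : T.dist c w = m) :
    Dominates (powerGraph T (2 * m)) S v w := by
  refine dominates_powerGraph.2 fun u hu huw ↦ ?_
  have hcv := dist_le_of_mem_shallowBranches hT hS hc hv
  have hcu : T.dist u c ≤ m := by
    by_cases huX : u ∈ shallowBranches T m S c
    · exact T.dist_comm ▸ dist_le_of_mem_shallowBranches hT hS hc huX
    · have hsplit := dist_eq_add_of_not_sameBranch hT
        (mt SameBranch.symm (not_sameBranch_of_mem_shallowBranches hw hu huX))
      lia
  have htriangle := hT.dist_triangle (u := u) (v := c) (w := v)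
  lia

theorem exists_dominates_of_dist_lt [DecidableEq V] (hT : T.IsTree)
    (hS : IsGeodConvex T S) (hc : c ∈ S) (hlr : IsDiametralPair T S l r) (hcl : T.dist c l = m + 1)
    (hbranch : ¬SameBranch T c l r) (hcv : T.dist c v < m) :
    ∃ w ∈ S \ shallowBranches T m S c, Dominates (powerGraph T (2 * m)) S v w := by
  obtain ⟨w, hw, hcw, hwl⟩ :=
    hS.exists_mem_dist_eq hT.connected hc hlr.left_mem (i := T.dist c v) (by lia)
  have hwl' : w ≠ c → SameBranch T c w l := fun hwc ↦
    sameBranch_of_dist_add_dist_eq hT.connected hwc (by rwa [hcw])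
  refine ⟨w, Finset.mem_sdiff.2 ⟨hw, fun hwX ↦ ?_⟩,
    dominates_powerGraph.2 fun u hu huw ↦ ?_⟩
  · exact (mem_shallowBranches.1 hwX).2.2 l hlr.left_mem hcl
      (hwl' (mem_shallowBranches.1 hwX).2.1)
  have htriangle := hT.connected.dist_triangle (u := u) (v := c) (w := v)
  by_cases huw' : SameBranch T c u w
  · have hur : ¬SameBranch T c u r := fun hur ↦
      hbranch (((huw'.trans (hwl' huw'.right_ne)).symm).trans hur)
    have hcu := hlr.dist_le_of_not_sameBranch hT.connected hu hur
    rw [T.dist_comm] at hcu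
    lia
  · have hsplit := dist_eq_add_of_not_sameBranch hT.connected huw'
    lia

-- Vertices at depth `< m` each give a new set, and so do those at depth `m` except for one; if that
-- exception occurs, then the branches have at least `m` vertices.
theorem mul_card_maxIndepSets_sdiff_shallowBranches_le [DecidableEq V] (hT : T.IsTree)
    (hS : IsGeodConvex T S) (hc : c ∈ S) (hlr : IsDiametralPair T S l r) (hcl : T.dist c l = m + 1)
    (hbranch : ¬SameBranch T c l r) :
    (m + 1) * #(maxIndepSets (powerGraph T (2 * m)) (S \ shallowBranches T m S c)) +
        m * #(shallowBranches T m S c) ≤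
      (m + 1) * #(maxIndepSets (powerGraph T (2 * m)) S) + 1 := by
  set X := shallowBranches T m S c
  set D := {v ∈ X | T.dist c v = m}
  have hDX : D ⊆ X := Finset.filter_subset _ _
  have hsdiff : (S \ D) \ (X \ D) = S \ X := by
    rw [sdiff_sdiff_left, Finset.sup_eq_union, Finset.union_sdiff_of_subset hDX]
  have htwins : #(maxIndepSets (powerGraph T (2 * m)) (S \ D)) + #D ≤
      #(maxIndepSets (powerGraph T (2 * m)) S) + 1 :=
    card_maxIndepSets_sdiff_add_card_le_of_twins (hDX.trans shallowBranches_subset)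
      fun v hv w hw ↦ dominates_of_mem_shallowBranches hT.connected hS hc (hDX hv) (hDX hw)
        (Finset.mem_filter.1 hw).2
  have hothers : #(maxIndepSets (powerGraph T (2 * m)) (S \ X)) + #(X \ D) ≤
      #(maxIndepSets (powerGraph T (2 * m)) (S \ D)) := by
    rw [← hsdiff]
    refine card_maxIndepSets_sdiff_add_card_le
      (Finset.sdiff_subset_sdiff shallowBranches_subset subset_rfl) fun v hv ↦ ?_
    obtain ⟨hvX, hvD⟩ := Finset.mem_sdiff.1 hv
    have hcv : T.dist c v < m :=
      (dist_le_of_mem_shallowBranches hT.connected hS hc hvX).lt_of_ne fun h ↦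
        hvD (Finset.mem_filter.2 ⟨hvX, h⟩)
    obtain ⟨w, hw, hvw⟩ := exists_dominates_of_dist_lt hT hS hc hlr hcl hbranch hcv
    exact ⟨w, hsdiff ▸ hw, fun u hu ↦ hvw u (Finset.sdiff_subset hu)⟩
  have hcard := Finset.card_sdiff_add_card_eq_card hDX
  obtain hD | ⟨v, hv⟩ := D.eq_empty_or_nonempty
  · simp only [hD, Finset.sdiff_empty] at hothers
    nlinarith
  · have hm : m ≤ #X := (Finset.mem_filter.1 hv).2 ▸
      dist_le_card_shallowBranches hT.connected hS hc (hDX hv)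
    nlinarith

end ShallowBranches

section Peeling

open scoped Finset

variable {V : Type*} {T : SimpleGraph V} {m e : ℕ} {S J : Finset V} {c l r y : V}

theorem sameBranch_of_dist_le (hT : T.Connected) {u v : V} (hu : m + 1 ≤ T.dist c u)
    (hv : m + 1 ≤ T.dist c v) (huv : T.dist u v ≤ 2 * m) : SameBranch T c u v := by
  by_contra hbranch
  have hsplit := dist_eq_add_of_not_sameBranch hT hbranch
  rw [T.dist_comm] at hu
  lia

theorem exists_isIndepSet_forall_sameBranch (hT : T.Connected) (hl : l ∈ S)
    (hcl : T.dist c l = m + 1) (hly : ¬SameBranch T c l y) :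
    ∃ K ⊆ S, (powerGraph T (2 * m)).IsIndepSet K ∧ l ∈ K ∧
      (∀ z ∈ K, T.dist c z = m + 1 ∧ ¬SameBranch T c z y) ∧
      ∀ z ∈ S, T.dist c z = m + 1 → ¬SameBranch T c z y → ∃ z' ∈ K, SameBranch T c z z' := by
  classical
  set Z : Finset V := {z ∈ S | T.dist c z = m + 1 ∧ ¬SameBranch T c z y}
  obtain ⟨K, hK, hlK⟩ := exists_mem_maxIndepSets_superset (H := powerGraph T (2 * m)) (S := Z)
    (J := {l}) (Finset.singleton_subset_iff.2 (Finset.mem_filter.2 ⟨hl, hcl, hly⟩))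
    (by simp [SimpleGraph.IsIndepSet])
  obtain ⟨hKZ, hKind, hKdom⟩ := mem_maxIndepSets_iff_dominating.1 hK
  refine ⟨K, hKZ.trans (Finset.filter_subset _ _), hKind, Finset.singleton_subset_iff.1 hlK,
    fun z hz ↦ (Finset.mem_filter.1 (hKZ hz)).2, fun z hz hcz hzy ↦ ?_⟩
  obtain ⟨z', hz', hzz'⟩ : ∃ z' ∈ K, T.dist z z' ≤ 2 * m := by
    by_cases hzK : z ∈ K
    · exact ⟨z, hzK, by simp⟩
    · obtain ⟨z', hz', hadj⟩ := hKdom z (Finset.mem_filter.2 ⟨hz, hcz, hzy⟩) hzK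
      exact ⟨z', hz', hadj.2⟩
  have hcz' := (Finset.mem_filter.1 (hKZ hz')).2.1
  exact ⟨z', hz', sameBranch_of_dist_le hT hcz.ge hcz'.ge hzz'⟩

-- One vertex at depth about `m + 1` in each branch is enough to come within `2m` of every vertex at
-- distance at most `m` from `c`.
theorem exists_mem_maxIndepSets_forall_le_dist (hT : T.IsTree) (hm : 1 ≤ m)
    (hdeep : ∀ v ∈ S, v ≠ c → ∃ u ∈ S, T.dist c u = m + 1 ∧ SameBranch T c v u)
    (hl : l ∈ S) (hcl : T.dist c l = m + 1) (hy : y ∈ S) (hcy : m + 1 ≤ T.dist c y)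
    (hcy' : T.dist c y ≤ m + 2) (hly : ¬SameBranch T c l y) :
    ∃ J ∈ maxIndepSets (powerGraph T (2 * m)) S, l ∈ J ∧ y ∈ J ∧ ∀ u ∈ J, m + 1 ≤ T.dist c u := by
  classical
  obtain ⟨K, hKS, hKind, hlK, hK, hKbranch⟩ :=
    exists_isIndepSet_forall_sameBranch hT.connected hl hcl hly
  have hyK : ∀ z ∈ K, ¬(powerGraph T (2 * m)).Adj y z := fun z hz hyz ↦
    (hK z hz).2 (sameBranch_of_dist_le hT.connected hcy (hK z hz).1.ge hyz.2).symm
  obtain ⟨J, hJ, hyKJ⟩ := exists_mem_maxIndepSets_superset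
    (Finset.insert_subset hy hKS) (isIndepSet_coe_insert.2 ⟨hKind, hyK⟩)
  obtain ⟨hJS, hJind, -⟩ := mem_maxIndepSets_iff_dominating.1 hJ
  obtain ⟨hyJ, hKJ⟩ := Finset.insert_subset_iff.1 hyKJ
  refine ⟨J, hJ, hKJ hlK, hyJ, fun u huJ ↦ ?_⟩
  by_contra! hcu
  obtain ⟨j, hjJ, hcj, huj⟩ : ∃ j ∈ J, m + 1 ≤ T.dist c j ∧ T.dist u j ≤ 2 * m := by
    obtain rfl | huc := eq_or_ne u c
    · exact ⟨l, hKJ hlK, hcl.ge, by lia⟩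
    rw [T.dist_comm] at hcu
    obtain ⟨z, hz, hcz, huz⟩ := hdeep u (hJS huJ) huc
    by_cases hzy : SameBranch T c z y
    · have huy := dist_add_two_le_of_sameBranch hT (huz.trans hzy)
      exact ⟨y, hyJ, hcy, by lia⟩
    · obtain ⟨z', hz', hzz'⟩ := hKbranch z hz hcz hzy
      have hcz' := (hK z' hz').1
      have huz' := dist_add_two_le_of_sameBranch hT (huz.trans hzz')
      exact ⟨z', hKJ hz', hcz'.ge, by lia⟩
  have hne : u ≠ j := by
    rintro rfl
    lia
  exact hJind huJ hjJ hne ⟨hne, huj⟩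

theorem mem_starMaxIndepSets_of_forall_le_dist (hT : T.IsTree) (hm : 1 ≤ m)
    (hS : IsGeodConvex T S) (hc : c ∈ S) (hcl : T.dist c l = m + 1)
    (hdepth : ∀ u ∈ S, SameBranch T c u l → T.dist c u ≤ m + 1)
    (hJ : J ∈ maxIndepSets (powerGraph T (2 * m)) S) (hl : l ∈ J)
    (hfar : ∀ u ∈ J, m + 1 ≤ T.dist c u) : J ∈ starMaxIndepSets (powerGraph T (2 * m)) S l := by
  obtain ⟨hJS, hJind, -⟩ := mem_maxIndepSets_iff_dominating.1 hJ
  obtain ⟨p, hpS, hcp, hpl⟩ :=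
    hS.exists_mem_dist_eq hT.connected hc (hJS hl) (i := m) (by lia)
  have hpc : p ≠ c := by
    rintro rfl
    rw [T.dist_self] at hcp
    lia
  have hpl' : SameBranch T c p l :=
    sameBranch_of_dist_add_dist_eq hT.connected hpc (by rwa [hcp])
  refine mem_starMaxIndepSets.2 ⟨hJ, hl, p, hpS, fun hpJ ↦ ?_, fun u hu hpu ↦ ?_⟩
  · have := hfar p hpJ
    lia
  have hup : SameBranch T c u p := by
    by_contra hup
    have hsplit := dist_eq_add_of_not_sameBranch hT.connected hup
    have hcu := hfar u hu
    rw [powerGraph_adj, T.dist_comm, hsplit, T.dist_comm] at hpu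
    lia
  have hul := hup.trans hpl'
  have hdist := dist_add_two_le_of_sameBranch hT hul
  have hcu := hdepth u (hJS hu) hul
  by_contra hne
  rw [T.dist_comm] at hcu
  exact hJind hu hl hne ⟨hne, by lia⟩

theorem exists_mem_starMaxIndepSets (hT : T.IsTree) (hm : 1 ≤ m) (hS : IsGeodConvex T S)
    (hdeep : ∀ v ∈ S, v ≠ c → ∃ u ∈ S, T.dist c u = m + 1 ∧ SameBranch T c v u)
    (hc : c ∈ S) (hlr : IsDiametralPair T S l r) (hcl : T.dist c l = m + 1)
    (hbranch : ¬SameBranch T c l r) (hy : y ∈ S) (hyr : SameBranch T c y r)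
    (hcy : m + 1 ≤ T.dist c y) (hcy' : T.dist c y ≤ m + 2) :
    ∃ J ∈ starMaxIndepSets (powerGraph T (2 * m)) S l, y ∈ J := by
  obtain ⟨J, hJ, hlJ, hyJ, hfar⟩ := exists_mem_maxIndepSets_forall_le_dist hT hm hdeep
    hlr.left_mem hcl hy hcy hcy' fun hly ↦ hbranch (hly.trans hyr)
  have hdepth : ∀ u ∈ S, SameBranch T c u l → T.dist c u ≤ m + 1 := fun u hu hul ↦
    hcl ▸ hlr.dist_le_of_not_sameBranch hT.connected hu fun hur ↦ hbranch (hul.symm.trans hur)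
  exact ⟨J, mem_starMaxIndepSets_of_forall_le_dist hT hm hS hc hcl hdepth hJ hlJ hfar, hyJ⟩

-- For `e = 1` the vertices at depths `m + 1` and `m + 2` on the way to `r` give two different sets.
theorem lt_card_starMaxIndepSets (hT : T.IsTree) (hm : 1 ≤ m) (hS : IsGeodConvex T S)
    (hdeep : ∀ v ∈ S, v ≠ c → ∃ u ∈ S, T.dist c u = m + 1 ∧ SameBranch T c v u)
    (hc : c ∈ S) (hlr : IsDiametralPair T S l r) (hcl : T.dist c l = m + 1)
    (hbranch : ¬SameBranch T c l r) (he : e ≤ 1) (hcr : m + 1 + e ≤ T.dist c r) :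
    e < #(starMaxIndepSets (powerGraph T (2 * m)) S l) := by
  have hne {y} (hcy : m + 1 ≤ T.dist c y) : y ≠ c := by
    rintro rfl
    simp at hcy
  obtain ⟨y, hy, hcy, hyr⟩ := hS.exists_mem_dist_eq hT.connected hc hlr.right_mem hcr
  have hyr' := sameBranch_of_dist_add_dist_eq hT.connected (hne (by lia)) (hcy ▸ hyr)
  obtain ⟨J, hJ, hyJ⟩ := exists_mem_starMaxIndepSets hT hm hS hdeep hc hlr hcl hbranch hy hyr'
    (by lia) (by lia)
  obtain rfl | rfl : e = 0 ∨ e = 1 := by lia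
  · exact Finset.card_pos.2 ⟨J, hJ⟩
  obtain ⟨z, hz, hcz, hzy⟩ :=
    hS.exists_mem_dist_eq hT.connected hc hy (i := m + 1) (by lia)
  have hzy' := sameBranch_of_dist_add_dist_eq hT.connected (hne hcz.ge) (hcz ▸ hzy)
  obtain ⟨K, hK, hzK⟩ := exists_mem_starMaxIndepSets hT hm hS hdeep hc hlr hcl hbranch hz
    (hzy'.trans hyr') (by lia) (by lia)
  have hKind := (mem_maxIndepSets_iff_dominating.1 (mem_starMaxIndepSets.1 hK).1).2.1
  have hzy_ne : z ≠ y := by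
    rintro rfl
    lia
  refine Finset.one_lt_card.2 ⟨J, hJ, K, hK, ?_⟩
  rintro rfl
  exact hKind hzK hyJ hzy_ne ⟨hzy_ne, by lia⟩

-- `S'` is `S` without the shallow branches at the vertex `c` at distance `m + 1` from `l` towards
-- `r`, and without `l`.
theorem exists_ssubset_mul_card_maxIndepSets_le (hT : T.IsTree) (hm : 1 ≤ m)
    (hS : IsGeodConvex T S) (hlr : IsDiametralPair T S l r) (he : e ≤ 1)
    (hdiam : 2 * (m + 1) + e ≤ T.dist l r) :
    ∃ S' ⊂ S, IsGeodConvex T S' ∧ m + 1 ≤ #S' ∧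
      (m + 1) * #(maxIndepSets (powerGraph T (2 * m)) S') + m * #S + e * (m + 1) ≤
        (m + 1) * #(maxIndepSets (powerGraph T (2 * m)) S) + m * #S' := by
  classical
  obtain ⟨c, hc, hlc, hlcr⟩ :=
    hS.exists_mem_dist_eq hT.connected hlr.left_mem hlr.right_mem (i := m + 1) (by lia)
  have hbranch : ¬SameBranch T c l r :=
    (not_sameBranch_iff_dist_eq_add hT).2 (by rw [hlc, hlcr])
  rw [T.dist_comm] at hlc
  set X := shallowBranches T m S c
  have hmem {v} (hv : v ∈ S) (hcv : m < T.dist c v) : v ∈ S \ X :=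
    Finset.mem_sdiff.2 ⟨hv, notMem_shallowBranches_of_lt_dist hT.connected hS hc hcv⟩
  have hl : l ∈ S \ X := hmem hlr.left_mem (by lia)
  have hr : r ∈ S \ X := hmem hlr.right_mem (by lia)
  have hc' : c ∈ S \ X := Finset.mem_sdiff.2 ⟨hc, notMem_shallowBranches_self⟩
  have hlr' := hlr.mono Finset.sdiff_subset hl hr
  have hSX := isGeodConvex_sdiff_shallowBranches (m := m) (c := c) hT.connected hS
  have hS' := hlr'.isGeodConvex_erase hT hSX
  have hstar := lt_card_starMaxIndepSets hT hm hSX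
    (fun _ ↦ exists_sameBranch_of_notMem_shallowBranches) hc' hlr' hlc hbranch he (by lia)
  have herase := card_maxIndepSets_erase_add_card_star_le (H := powerGraph T (2 * m)) hl
  have hshallow := mul_card_maxIndepSets_sdiff_shallowBranches_le hT hS hc hlr hlc hbranch
  have hcard : #(S \ X) + #X = #S := Finset.card_sdiff_add_card_eq_card shallowBranches_subset
  have hcard' := Finset.card_erase_add_one hl
  refine ⟨(S \ X).erase l, ?_, hS', ?_, ?_⟩
  · exact (Finset.erase_ssubset hl).trans_subset Finset.sdiff_subset
  · have hcl : c ≠ l := by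
      rintro rfl
      simp at hlc
    have hrl : r ≠ l := by
      rintro rfl
      simp at hdiam
    have := hS'.dist_lt_card hT.connected (Finset.mem_erase.2 ⟨hcl, hc'⟩)
      (Finset.mem_erase.2 ⟨hrl, hr⟩)
    lia
  · nlinarith

end Peeling

section LowerBound

open scoped Finset

variable {V : Type*} {T : SimpleGraph V} {m : ℕ} {S : Finset V} {c l r : V}

-- The vertices at distance `m + 1` from `c` are mutual twins, and the other ones form a clique.
theorem card_le_card_maxIndepSets_add_one_of_forall_dist_le (hT : T.IsTree)
    (hle : ∀ u ∈ S, T.dist c u ≤ m + 1)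
    (hbranch : ∀ u ∈ S, ∀ v ∈ S, T.dist c u = m + 1 → T.dist c v = m + 1 → SameBranch T c u v) :
    #S ≤ #(maxIndepSets (powerGraph T (2 * m)) S) + 1 := by
  classical
  set E : Finset V := {u ∈ S | T.dist c u = m + 1}
  have hE {u} : u ∈ E ↔ u ∈ S ∧ T.dist c u = m + 1 := Finset.mem_filter
  have hES : E ⊆ S := Finset.filter_subset _ _
  have htwins : ∀ v ∈ E, ∀ w ∈ E, Dominates (powerGraph T (2 * m)) S v w := fun v hv w hw ↦ by
    refine dominates_powerGraph.2 fun u hu huw ↦ ?_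
    obtain ⟨hvS, hcv⟩ := hE.1 hv
    obtain ⟨hwS, hcw⟩ := hE.1 hw
    have hcu := hle u hu
    rw [T.dist_comm] at hcu
    by_cases huw' : SameBranch T c u w
    · have huv := dist_add_two_le_of_sameBranch hT (huw'.trans (hbranch w hwS v hvS hcw hcv))
      lia
    · have hsplit := dist_eq_add_of_not_sameBranch hT.connected huw'
      have htriangle := hT.connected.dist_triangle (u := u) (v := c) (w := v)
      lia
  have hclique : (powerGraph T (2 * m)).IsClique ↑(S \ E) := fun u hu v hv huv ↦ by
    have hle' {u} (hu : u ∈ S \ E) : T.dist c u ≤ m := by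
      rw [Finset.mem_sdiff, hE, not_and] at hu
      exact Nat.le_of_lt_succ ((hle u hu.1).lt_of_ne (hu.2 hu.1))
    have hcu := hle' hu
    have hcv := hle' hv
    rw [T.dist_comm] at hcu
    have htriangle := hT.connected.dist_triangle (u := u) (v := c) (w := v)
    exact ⟨huv, by lia⟩
  have hcard := Finset.card_sdiff_add_card_eq_card hES
  have hrest := card_le_card_maxIndepSets_of_isClique hclique
  have hsdiff := card_maxIndepSets_sdiff_add_card_le_of_twins hES htwins
  lia

theorem card_le_card_maxIndepSets_add_one (hT : T.IsTree) (hlr : IsDiametralPair T S l r)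
    (hdiam : T.dist l r = 2 * m + 1) : #S ≤ #(maxIndepSets (powerGraph T (2 * m)) S) + 1 := by
  obtain ⟨c, hlc, hlcr⟩ := exists_dist_eq_of_le hT.connected (i := m + 1) (u := l) (v := r)
    (by lia)
  have hbranch : ¬SameBranch T c l r :=
    (not_sameBranch_iff_dist_eq_add hT).2 (by rw [hlc, hlcr])
  have hcl : T.dist c l = m + 1 := by rw [T.dist_comm, hlc]
  have hle : ∀ u ∈ S, T.dist c u ≤ m + 1 := fun u hu ↦ by
    by_cases hur : SameBranch T c u r
    · have := hlr.symm.dist_le_of_not_sameBranch hT.connected hu fun hul ↦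
        hbranch (hul.symm.trans hur)
      lia
    · exact hcl ▸ hlr.dist_le_of_not_sameBranch hT.connected hu hur
  have hbranch_l : ∀ u ∈ S, T.dist c u = m + 1 → SameBranch T c u l := fun u hu hcu ↦ by
    by_contra hul
    have hsplit := dist_eq_add_of_not_sameBranch hT.connected hul
    have hmax := hlr.dist_le u hu l hlr.left_mem
    rw [T.dist_comm] at hcu
    lia
  exact card_le_card_maxIndepSets_add_one_of_forall_dist_le hT hle fun u hu v hv hcu hcv ↦
    (hbranch_l u hu hcu).trans (hbranch_l v hv hcv).symm

theorem mul_card_add_le_mul_card_maxIndepSets (hT : T.IsTree) (hm : 1 ≤ m)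
    (hS : IsGeodConvex T S) (hcard : m + 1 ≤ #S) :
    m * #S + (m + 1) ≤ (m + 1) * #(maxIndepSets (powerGraph T (2 * m)) S) := by
  induction S using Finset.strongInduction with
  | H S ih =>
    obtain ⟨l, r, hlr⟩ := exists_isDiametralPair T (S := S) (Finset.card_pos.1 (by lia))
    have hlr_card := hS.dist_lt_card hT.connected hlr.left_mem hlr.right_mem
    obtain hsmall | hmid | hlarge :
        T.dist l r ≤ 2 * m ∨ T.dist l r = 2 * m + 1 ∨ 2 * (m + 1) ≤ T.dist l r := by lia
    · have hclique : (powerGraph T (2 * m)).IsClique ↑S := fun u hu v hv huv ↦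
        ⟨huv, (hlr.dist_le u hu v hv).trans hsmall⟩
      have := card_le_card_maxIndepSets_of_isClique hclique
      nlinarith
    · have := card_le_card_maxIndepSets_add_one hT hlr hmid
      nlinarith
    · obtain ⟨S', hS'S, hS', hcard', hpeel⟩ :=
        exists_ssubset_mul_card_maxIndepSets_le hT hm hS hlr zero_le_one hlarge
      have := ih S' hS'S hS' hcard'
      lia

theorem mul_card_add_two_mul_le_mul_card_maxIndepSets (hT : T.IsTree) (hm : 1 ≤ m)
    (hS : IsGeodConvex T S) (hlr : IsDiametralPair T S l r) (hdiam : 2 * m + 3 ≤ T.dist l r) :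
    m * #S + 2 * (m + 1) ≤ (m + 1) * #(maxIndepSets (powerGraph T (2 * m)) S) := by
  obtain ⟨S', -, hS', hcard', hpeel⟩ :=
    exists_ssubset_mul_card_maxIndepSets_le hT hm hS hlr le_rfl (by lia)
  have := mul_card_add_le_mul_card_maxIndepSets hT hm hS' hcard'
  lia

end LowerBound

theorem isDiametralPair_univ_gdiam_le {V : Type*} [Fintype V] {G : SimpleGraph V} {l r : V}
    (h : IsDiametralPair G Finset.univ l r) : gdiam G ≤ G.dist l r :=
  Finset.sup_le fun u _ ↦ Finset.sup_le fun v _ ↦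
    h.dist_le u (Finset.mem_univ u) v (Finset.mem_univ v)

theorem fk_two_mul_lt {m n M : ℕ} (h : m * n + 2 * (m + 1) ≤ (m + 1) * M) : fk (2 * m) n < M := by
  have hlt : n < (m + 1) * (n / (m + 1) + 1) := Nat.lt_mul_div_succ n m.succ_pos
  rw [fk, Nat.mul_mod_right, Nat.sub_zero, Nat.mul_div_cancel_left m two_pos]
  split_ifs with hn
  · nlinarith
  · have hsub : n - n / (m + 1) + n / (m + 1) = n := Nat.sub_add_cancel (Nat.div_le_self n (m + 1))
    nlinarith

theorem stmt_14_general {V : Type*} [Fintype V] (k : ℕ) (hk : 2 ≤ k) (hke : Even k)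
    (T : SimpleGraph V) (hT : T.IsTree) (hdiam : k + 3 ≤ gdiam T) :
    fk k (Fintype.card V) < mdi T k := by
  obtain ⟨m, rfl⟩ := even_iff_exists_two_mul.1 hke
  have := hT.connected.nonempty
  obtain ⟨l, r, hlr⟩ := exists_isDiametralPair T Finset.univ_nonempty
  rw [mdi_eq_card_maxIndepSets]
  refine fk_two_mul_lt (mul_card_add_two_mul_le_mul_card_maxIndepSets hT (by lia)
    (fun _ _ _ _ _ _ ↦ Finset.mem_univ _) hlr (hdiam.trans ?_))
  exact isDiametralPair_univ_gdiam_le hlr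

/-- Let `k ≥ 2` be even and let `T` be a tree on `n` vertices of diameter
at least `k + 4`. Then `mdi_k(T) > f_k(n)`. -/
theorem stmt_14 (k : ℕ) (hk : 2 ≤ k) (hke : Even k) {V : Type} [Fintype V]
    {n : ℕ} (hn : Fintype.card V = n) (T : SimpleGraph V) (hT : T.IsTree)
    (hdiam : k + 4 ≤ gdiam T) :
    fk k n < mdi T k :=
  hn ▸ stmt_14_general k hk hke T hT (by lia)
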